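/- Tube scalars commute with the c-product: for every tube a ∈ ℝ^{1×1×n3}, every A ∈ ℝ^{n1×n2×n3} and every B ∈ ℝ^{n2×m×n3}, one has A ⋆_c (a ⊛ B) = a ⊛ (A ⋆_c B) = (a ⊛ A) ⋆_c B. -/

import Mathlib

open Matrix BigOperators Kronecker

noncomputable section

/-- The `n × n` discrete cosine transform (DCT) matrix, with 0-based indexing of the 1-based
formula `(C_n)_{ij} = √((2−δ_{i1})/n)·cos((i−1)(2j−1)π/(2n))`. -/
def dctMatrix (n : ℕ) : Matrix (Fin n) (Fin n) ℝ :=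
  Matrix.of fun i j =>
    Real.sqrt ((2 - if (i : ℕ) = 0 then 1 else 0) / n) *
      Real.cos ((i : ℝ) * (2 * (j : ℝ) + 1) * Real.pi / (2 * n))

/-- The `n × n` upshift matrix `Z`, with ones on the first superdiagonal. -/
def upshift (n : ℕ) : Matrix (Fin n) (Fin n) ℝ :=
  Matrix.of fun i j => if (i : ℕ) + 1 = (j : ℕ) then 1 else 0

/-- `W = diag(C_n(:,1))`, the diagonal matrix whose diagonal is the first column of the DCT
matrix. -/
def Wdiag (n : ℕ) : Matrix (Fin n) (Fin n) ℝ :=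
  Matrix.diagonal fun i => dctMatrix n i ⟨0, i.pos⟩

/-- The `n × n` transform matrix `M = W⁻¹ C_n (I + Z)`. -/
def transformM (n : ℕ) : Matrix (Fin n) (Fin n) ℝ :=
  (Wdiag n)⁻¹ * dctMatrix n * (1 + upshift n)

/-- The Hankel part `H_{p,q}` of the `(p,q)` block of `mat(A)` (0-based indices:
the 1-based conditions `p+q ≤ n3`, `p+q = n3+1`, `p+q ≥ n3+2` become
`p+q+1 < n3`, `p+q+1 = n3` and `p+q+1 > n3`, with blocks `A^{(p+q+1)}` resp. `0`
resp. `A^{(2·n3−(p+q)−1)}` in 0-based numbering of the slices). -/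
def hankelPart {n1 n2 n3 : ℕ} (A : Fin n3 → Matrix (Fin n1) (Fin n2) ℝ) (p q : Fin n3) :
    Matrix (Fin n1) (Fin n2) ℝ :=
  if h : p.val + q.val + 1 < n3 then A ⟨p.val + q.val + 1, h⟩
  else if h' : p.val + q.val + 1 = n3 then 0
  else A ⟨2 * n3 - (p.val + q.val) - 1, by
    have hp := p.isLt; have hq := q.isLt; omega⟩

/-- `mat(A)`: the block Toeplitz-plus-Hankel matrix associated with a third-order tensor `A`,
identified with the tuple of its frontal slices.  Rows are indexed by `Fin n3 × Fin n1`
(block row, row within block) and columns by `Fin n3 × Fin n2`. -/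
def tmat {n1 n2 n3 : ℕ} (A : Fin n3 → Matrix (Fin n1) (Fin n2) ℝ) :
    Matrix (Fin n3 × Fin n1) (Fin n3 × Fin n2) ℝ :=
  Matrix.of fun pi qj =>
    (A ⟨Nat.dist pi.1.val qj.1.val, by
        have hp := pi.1.isLt; have hq := qj.1.isLt
        simp only [Nat.dist]; omega⟩ + hankelPart A pi.1 qj.1) pi.2 qj.2

/-- The `p`-th transformed slice `Ã^{(p)} = Σ_q M_{pq} A^{(q)}` of a tensor `A`. -/
def tSlice {n1 n2 n3 : ℕ} (A : Fin n3 → Matrix (Fin n1) (Fin n2) ℝ) (p : Fin n3) :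
    Matrix (Fin n1) (Fin n2) ℝ :=
  ∑ q, transformM n3 p q • A q

/-- Toeplitz-plus-Hankel matrix `th(v)` of a vector `v ∈ ℝⁿ` (0-based indexing of the 1-based
formula of the paper). -/
def thMat {n : ℕ} (v : Fin n → ℝ) : Matrix (Fin n) (Fin n) ℝ :=
  Matrix.of fun p q =>
    v ⟨Nat.dist p.val q.val, by
        have hp := p.isLt; have hq := q.isLt; simp only [Nat.dist]; omega⟩ +
    (if h : p.val + q.val + 1 < n then v ⟨p.val + q.val + 1, h⟩
     else if h' : p.val + q.val + 1 = n then 0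
     else v ⟨2 * n - (p.val + q.val) - 1, by
       have hp := p.isLt; have hq := q.isLt; omega⟩)

/-- The product `a ⊛ B` of a tube `a ∈ ℝ^{1×1×n3}` (identified with a vector of `ℝ^{n3}`) with a
tensor `B`: the tensor whose transformed slices are `(a ⊛ B)~^{(p)} = (M a)_p • B̃^{(p)}`. -/
def tubeSMul {n1 n2 n3 : ℕ} (a : Fin n3 → ℝ) (B : Fin n3 → Matrix (Fin n1) (Fin n2) ℝ) :
    Fin n3 → Matrix (Fin n1) (Fin n2) ℝ :=
  fun t => ∑ p, (transformM n3)⁻¹ t p • ((transformM n3).mulVec a p • tSlice B p)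

/-- The c-product `a ⋆_c b` of two tubes: the tube whose transform is the componentwise product
of the transforms, `M (a ⋆_c b) = (M a) .* (M b)`. -/
def tubeCMul {n3 : ℕ} (a b : Fin n3 → ℝ) : Fin n3 → ℝ :=
  (transformM n3)⁻¹.mulVec fun p => (transformM n3).mulVec a p * (transformM n3).mulVec b p

/-- Frobenius norm of a real matrix. -/
def frobNorm {m n : ℕ} (B : Matrix (Fin m) (Fin n) ℝ) : ℝ :=
  Real.sqrt (∑ i, ∑ j, (B i j) ^ 2)

/-- Frobenius norm of a third-order tensor. -/
def tFrobNorm {n1 n2 n3 : ℕ} (A : Fin n3 → Matrix (Fin n1) (Fin n2) ℝ) : ℝ :=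
  Real.sqrt (∑ k, ∑ i, ∑ j, (A k i j) ^ 2)

/-- The `i`-th lateral slice `U(:,i,:)` of a tensor `U`: the `n1 × 1 × n3` tensor whose `k`-th
frontal slice is the `i`-th column of `U^{(k)}`. -/
def lateralSlice {n1 n2 n3 : ℕ} (U : Fin n3 → Matrix (Fin n1) (Fin n2) ℝ) (i : Fin n2) :
    Fin n3 → Matrix (Fin n1) (Fin 1) ℝ :=
  fun k => Matrix.of fun r _ => U k r i

/-- The `(i,j)` tube `S(i,j,:)` of a tensor `S`: the `1 × 1 × n3` tensor whose `k`-th frontal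
slice is the `(i,j)` entry of `S^{(k)}`. -/
def entryTube {n1 n2 n3 : ℕ} (S : Fin n3 → Matrix (Fin n1) (Fin n2) ℝ) (i : Fin n1) (j : Fin n2) :
    Fin n3 → Matrix (Fin 1) (Fin 1) ℝ :=
  fun k => Matrix.of fun _ _ => S k i j

/-- Slicewise transpose of a tensor. -/
def sTranspose {n1 n2 n3 : ℕ} (A : Fin n3 → Matrix (Fin n1) (Fin n2) ℝ) :
    Fin n3 → Matrix (Fin n2) (Fin n1) ℝ :=
  fun k => (A k)ᵀ

/-- `TVect(A)`: stacking the lateral slices of `A` one below the other; the `k`-th frontal slice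
of `TVect(A)` is obtained by stacking the columns of `A^{(k)}` (entry `r = j·n1 + i` is
`A^{(k)}_{i,j}`). -/
def tvect {n1 n2 n3 : ℕ} (A : Fin n3 → Matrix (Fin n1) (Fin n2) ℝ) :
    Fin n3 → Matrix (Fin (n1 * n2)) (Fin 1) ℝ :=
  fun k => Matrix.of fun r _ =>
    A k ⟨r.val % n1, Nat.mod_lt _ (Nat.pos_of_ne_zero fun h0 => absurd r.isLt (by simp [h0]))⟩
        ⟨r.val / n1, Nat.div_lt_of_lt_mul r.isLt⟩

/-- cosine wave attached to row `k` -/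
def cw (n k : ℕ) (x : ℝ) : ℝ := Real.cos ((k : ℝ) * (2 * x + 1) * Real.pi / (2 * n))

lemma cw_neg (n k : ℕ) (x : ℝ) : cw n k (-1 - x) = cw n k x := by
  unfold cw
  rw [← Real.cos_neg]
  congr 1
  ring

lemma cw_refl (n k : ℕ) (hn : 0 < n) (x : ℝ) : cw n k (2 * n - 1 - x) = cw n k x := by
  unfold cw
  rw [← Real.cos_nat_mul_two_pi_sub _ k]
  congr 1
  have : (n : ℝ) ≠ 0 := by positivity
  field_simp
  ring

lemma cw_add (n k : ℕ) (x j : ℝ) :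
    cw n k (x + j) + cw n k (x - j) = 2 * Real.cos ((k : ℝ) * j * Real.pi / n) * cw n k x := by
  unfold cw
  have h1 : (k : ℝ) * (2 * (x + j) + 1) * Real.pi / (2 * n)
      = (k : ℝ) * (2 * x + 1) * Real.pi / (2 * n) + (k : ℝ) * j * Real.pi / n := by
    rcases eq_or_ne (n : ℝ) 0 with h | h
    · simp [h]
    · field_simp
      ring
  have h2 : (k : ℝ) * (2 * (x - j) + 1) * Real.pi / (2 * n)
      = (k : ℝ) * (2 * x + 1) * Real.pi / (2 * n) - (k : ℝ) * j * Real.pi / n := by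
    rcases eq_or_ne (n : ℝ) 0 with h | h
    · simp [h]
    · field_simp
      ring
  rw [h1, h2, Real.cos_add, Real.cos_sub]
  ring

/-- coefficient of `v j` in `thMat v p q`, first part -/
def e1 (n j p q : ℕ) : ℝ := (if p = q + j then 1 else 0) + (if p + q + 1 + j = 2 * n then 1 else 0)

/-- coefficient of `v j` in `thMat v p q`, second part -/
def e2 (j p q : ℕ) : ℝ := (if p + j = q ∧ j ≠ 0 then 1 else 0) + (if p + q + 1 = j then 1 else 0)

lemma sum_val {n : ℕ} (v : Fin n → ℝ) (i : Fin n) (g : ℕ → ℝ)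
    (h : ∀ j : Fin n, g j = if j = i then 1 else 0) : v i = ∑ j : Fin n, g j * v j := by
  simp [h]

lemma thMat_eq {n : ℕ} (v : Fin n → ℝ) (p q : Fin n) :
    thMat v p q = ∑ j : Fin n, (e1 n j p q + e2 j p q) * v j := by
  have hp := p.isLt
  have hq := q.isLt
  have key : ∀ j : Fin n, e1 n j p q + e2 j p q
      = (if Nat.dist p.val q.val = j then 1 else 0) +
        ((if p.val + q.val + 1 = j then 1 else 0)
          + (if p.val + q.val + 1 + j = 2 * n then 1 else 0)) := by
    intro j
    have : ((if Nat.dist p.val q.val = j then 1 else 0) : ℝ)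
      = (if p.val = q + j then 1 else 0) + (if p.val + j = q ∧ (j : ℕ) ≠ 0 then 1 else 0) := by
      have hd : Nat.dist p.val q.val = j ↔ p.val = q + j ∨ (p.val + j = q ∧ (j : ℕ) ≠ 0) := by
        unfold Nat.dist
        omega
      simp only [hd]
      by_cases h1 : p.val = q + j
      · have h2 : ¬ (p.val + j = q ∧ (j : ℕ) ≠ 0) := by omega
        rw [if_pos (Or.inl h1), if_pos h1, if_neg h2, add_zero]
      · by_cases h2 : p.val + j = q ∧ (j : ℕ) ≠ 0
        · rw [if_pos (Or.inr h2), if_neg h1, if_pos h2, zero_add]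
        · rw [if_neg (not_or.mpr ⟨h1, h2⟩), if_neg h1, if_neg h2, add_zero]
    rw [this, e1, e2]
    ring
  simp only [key, add_mul, Finset.sum_add_distrib, thMat, Matrix.of_apply]
  congr 1
  · apply sum_val v _ (fun j => if Nat.dist p.val q.val = j then 1 else 0)
    intro j
    simp only [Fin.ext_iff, eq_comm]
  · split_ifs with h h'
    · rw [sum_val v ⟨_, h⟩ (fun j => if p.val + q.val + 1 = j then 1 else 0)
        (by intro j; simp only [Fin.ext_iff, eq_comm])]
      rw [left_eq_add]
      apply Finset.sum_eq_zero
      intro j _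
      rw [if_neg (by omega), zero_mul]
    · rw [Finset.sum_eq_zero, Finset.sum_eq_zero, add_zero]
      · intro j _
        rw [if_neg (by omega), zero_mul]
      · intro j _
        rw [if_neg (by omega), zero_mul]
    · rw [sum_val v _ (fun j => if p.val + q.val + 1 + j = 2 * n then 1 else 0)]
      · rw [right_eq_add]
        apply Finset.sum_eq_zero
        intro j _
        rw [if_neg (by omega), zero_mul]
      · intro j
        simp only [Fin.ext_iff]
        split_ifs <;> first | omega | simp

lemma sum_e1 {n : ℕ} (k : ℕ) (j q : Fin n) :
    ∑ p : Fin n, cw n k p * e1 n j p q = cw n k ((q : ℝ) + j) := by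
  have hj := j.isLt
  have hq := q.isLt
  by_cases h : q.val + j < n
  · rw [Finset.sum_eq_single (⟨q.val + j, h⟩ : Fin n)]
    · simp only [e1]
      rw [if_pos trivial, if_neg (by omega)]
      push_cast
      ring
    · intro p _ hp
      have := p.isLt
      rw [Ne, Fin.ext_iff] at hp
      simp only [e1]
      rw [if_neg hp, if_neg (by omega)]
      ring
    · simp
  · have hlt : 2 * n - 1 - (q.val + j) < n := by omega
    rw [Finset.sum_eq_single (⟨2 * n - 1 - (q.val + j), hlt⟩ : Fin n)]
    · simp only [e1]
      rw [if_neg (by omega), if_pos (by omega), ← cw_refl n k (by omega) ((q : ℝ) + j)]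
      have : ((2 * n - 1 - (q.val + j) : ℕ) : ℝ) = 2 * n - 1 - ((q : ℝ) + j) := by
        rw [Nat.cast_sub (by omega), Nat.cast_sub (by omega)]
        push_cast
        ring
      rw [this]
      ring
    · intro p _ hp
      have := p.isLt
      rw [Ne, Fin.ext_iff] at hp
      simp only at hp
      simp only [e1]
      rw [if_neg (by omega), if_neg (by omega)]
      ring
    · simp

lemma sum_e2 {n : ℕ} (k : ℕ) (j q : Fin n) :
    ∑ p : Fin n, cw n k p * e2 j p q = if (j : ℕ) = 0 then 0 else cw n k ((q : ℝ) - j) := by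
  have hj := j.isLt
  have hq := q.isLt
  split_ifs with h0
  · apply Finset.sum_eq_zero
    intro p _
    simp [e2, h0]
  by_cases h : j.val ≤ q
  · have hlt : q.val - j < n := by omega
    rw [Finset.sum_eq_single (⟨q.val - j, hlt⟩ : Fin n)]
    · simp only [e2]
      rw [if_pos (by omega), if_neg (by omega), Nat.cast_sub h]
      ring
    · intro p _ hp
      rw [Ne, Fin.ext_iff] at hp
      simp only at hp
      simp only [e2]
      rw [if_neg (by omega), if_neg (by omega)]
      ring
    · simp
  · have hlt : j.val - (q + 1) < n := by omega
    rw [Finset.sum_eq_single (⟨j.val - (q + 1), hlt⟩ : Fin n)]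
    · simp only [e2]
      rw [if_neg (by omega), if_pos (by omega), ← cw_neg n k ((q : ℝ) - j), Nat.cast_sub (by omega)]
      push_cast
      ring_nf
    · intro p _ hp
      rw [Ne, Fin.ext_iff] at hp
      simp only at hp
      simp only [e2]
      rw [if_neg (by omega), if_neg (by omega)]
      ring
    · simp

/-- eigenvalue of `thMat v` at row `k` -/
def lam {n : ℕ} (v : Fin n → ℝ) (k : ℕ) : ℝ :=
  ∑ j : Fin n, (if (j : ℕ) = 0 then 1 else 2 * Real.cos ((k : ℝ) * j * Real.pi / n)) * v j

lemma cw_thMat {n : ℕ} (v : Fin n → ℝ) (k : ℕ) (q : Fin n) :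
    ∑ p : Fin n, cw n k p * thMat v p q = lam v k * cw n k q := by
  simp only [thMat_eq, Finset.mul_sum, lam, Finset.sum_mul]
  rw [Finset.sum_comm]
  apply Finset.sum_congr rfl
  intro j _
  have : ∀ p : Fin n, cw n k p * ((e1 n j p q + e2 j p q) * v j)
      = (cw n k p * e1 n j p q + cw n k p * e2 j p q) * v j := fun p => by ring
  simp only [this]
  rw [← Finset.sum_mul, Finset.sum_add_distrib, sum_e1, sum_e2]
  split_ifs with h
  · simp [h]
    ring
  · rw [cw_add]
    ring

lemma dct_thMat {n : ℕ} (v : Fin n → ℝ) :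
    dctMatrix n * thMat v = Matrix.diagonal (fun k : Fin n => lam v k) * dctMatrix n := by
  ext k q
  rw [Matrix.diagonal_mul, Matrix.mul_apply]
  have h : ∀ p : Fin n, dctMatrix n k p
      = Real.sqrt ((2 - if (k : ℕ) = 0 then 1 else 0) / n) * cw n k p := fun p => rfl
  simp only [h, mul_assoc]
  rw [← Finset.mul_sum, cw_thMat]
  ring

lemma thMat_col {n : ℕ} (v : Fin n → ℝ) (p : Fin n) :
    ((1 + upshift n).mulVec v) p = thMat v p ⟨0, p.pos⟩ := by
  have hp := p.isLt
  rw [Matrix.add_mulVec, Matrix.one_mulVec, Pi.add_apply]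
  simp only [thMat, Matrix.of_apply]
  have h00 : (⟨Nat.dist p.val 0, by simp [Nat.dist]⟩ : Fin n) = p := by
    simp [Fin.ext_iff, Nat.dist]
  rw [h00]
  congr 1
  simp only [upshift, Matrix.mulVec, dotProduct, Matrix.of_apply]
  split_ifs with h h'
  · symm
    apply sum_val v _ (fun j => if p.val + 1 = j then 1 else 0)
    intro j
    simp only [Fin.ext_iff, eq_comm, add_zero]
  · apply Finset.sum_eq_zero
    intro j _
    have hj := j.isLt
    rw [if_neg (by omega), zero_mul]
  · exfalso
    omega

section unit
variable {n : ℕ} (hM : IsUnit (transformM n).det)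

lemma unit_parts (hM : IsUnit (transformM n).det) :
    IsUnit (Wdiag n).det ∧ IsUnit (dctMatrix n).det := by
  rw [transformM, Matrix.det_mul, Matrix.det_mul, IsUnit.mul_iff, IsUnit.mul_iff,
    Matrix.isUnit_nonsing_inv_det_iff] at hM
  exact hM.1

lemma mulVec_eq (hM : IsUnit (transformM n).det) (v : Fin n → ℝ) (k : Fin n) :
    (transformM n).mulVec v k = lam v k := by
  obtain ⟨hW, hD⟩ := unit_parts hM
  have h1 : Wdiag n * transformM n = dctMatrix n * (1 + upshift n) := by
    rw [transformM, Matrix.mul_assoc, Matrix.mul_nonsing_inv_cancel_left _ _ hW]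
  have h2 := congrFun (congrArg (fun X => X.mulVec v) h1) k
  simp only [← Matrix.mulVec_mulVec] at h2
  rw [Wdiag, Matrix.mulVec_diagonal] at h2
  have h3 : (dctMatrix n).mulVec ((1 + upshift n).mulVec v) k
      = (dctMatrix n * thMat v) k ⟨0, k.pos⟩ := by
    rw [Matrix.mul_apply]
    simp only [Matrix.mulVec, dotProduct]
    apply Finset.sum_congr rfl
    intro p _
    rw [← thMat_col]
    rfl
  rw [h3, dct_thMat, Matrix.diagonal_mul] at h2
  have h0 : dctMatrix n k ⟨0, k.pos⟩ ≠ 0 := by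
    rw [Wdiag, Matrix.det_diagonal, isUnit_iff_ne_zero, Finset.prod_ne_zero_iff] at hW
    exact hW k (Finset.mem_univ k)
  rw [mul_comm] at h2
  exact mul_right_cancel₀ h0 h2

lemma thMat_tubeCMul (hM : IsUnit (transformM n).det) (a b : Fin n → ℝ) :
    thMat (tubeCMul a b) = thMat a * thMat b := by
  obtain ⟨hW, hD⟩ := unit_parts hM
  have h : dctMatrix n * thMat (tubeCMul a b) = dctMatrix n * (thMat a * thMat b) := by
    rw [← Matrix.mul_assoc, dct_thMat, dct_thMat, Matrix.mul_assoc, dct_thMat, ← Matrix.mul_assoc,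
      Matrix.diagonal_mul_diagonal]
    congr 2
    ext k
    rw [← mulVec_eq hM, ← mulVec_eq hM, ← mulVec_eq hM, tubeCMul, Matrix.mulVec_mulVec,
      Matrix.mul_nonsing_inv _ hM, Matrix.one_mulVec]
  rw [← Matrix.nonsing_inv_mul_cancel_left _ (thMat (tubeCMul a b)) hD, h,
    Matrix.nonsing_inv_mul_cancel_left _ _ hD]

lemma thMat_comm (hM : IsUnit (transformM n).det) (a b : Fin n → ℝ) :
    thMat a * thMat b = thMat b * thMat a := by
  rw [← thMat_tubeCMul hM, ← thMat_tubeCMul hM]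
  simp only [tubeCMul, mul_comm]

end unit

lemma tmat_apply {n1 n2 n3 : ℕ} (A : Fin n3 → Matrix (Fin n1) (Fin n2) ℝ)
    (p q : Fin n3) (i : Fin n1) (j : Fin n2) :
    tmat A (p, i) (q, j) = thMat (fun k => A k i j) p q := by
  simp only [tmat, thMat, Matrix.of_apply, Matrix.add_apply, hankelPart]
  congr 1
  split_ifs <;> rfl

lemma tubeSMul_apply {n1 n2 n3 : ℕ} (a : Fin n3 → ℝ) (A : Fin n3 → Matrix (Fin n1) (Fin n2) ℝ)
    (i : Fin n1) (j : Fin n2) :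
    (fun k => tubeSMul a A k i j) = tubeCMul a (fun k => A k i j) := by
  ext k
  simp only [tubeSMul, tubeCMul, tSlice, Matrix.mulVec, dotProduct, Matrix.sum_apply,
    Matrix.smul_apply, smul_eq_mul]

lemma tmat_mul_apply {n1 n2 m n3 : ℕ} (A : Fin n3 → Matrix (Fin n1) (Fin n2) ℝ)
    (B : Fin n3 → Matrix (Fin n2) (Fin m) ℝ) (p q : Fin n3) (i : Fin n1) (j : Fin m) :
    (tmat A * tmat B) (p, i) (q, j)
      = (∑ l, thMat (fun k => A k i l) * thMat (fun k => B k l j)) p q := by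
  rw [Matrix.mul_apply, Fintype.sum_prod_type_right, Matrix.sum_apply]
  simp only [tmat_apply, Matrix.mul_apply]

/-- tube scalars commute with the c-product: for every tube `a`, every `A` and
every `B`, one has `A ⋆_c (a ⊛ B) = a ⊛ (A ⋆_c B) = (a ⊛ A) ⋆_c B`, where `A ⋆_c B` is the
unique tensor `C` with `mat(C) = mat(A)·mat(B)`. -/
theorem tube_commutes_cProd {n1 n2 m n3 : ℕ} (a : Fin n3 → ℝ)
    (A : Fin n3 → Matrix (Fin n1) (Fin n2) ℝ) (B : Fin n3 → Matrix (Fin n2) (Fin m) ℝ)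
    (C : Fin n3 → Matrix (Fin n1) (Fin m) ℝ) (hC : tmat C = tmat A * tmat B) :
    tmat A * tmat (tubeSMul a B) = tmat (tubeSMul a C) ∧
    tmat (tubeSMul a A) * tmat B = tmat (tubeSMul a C) := by
  by_cases hM : IsUnit (transformM n3).det
  · have hC' : ∀ i j, thMat (fun k => C k i j)
        = ∑ l, thMat (fun k => A k i l) * thMat (fun k => B k l j) := by
      intro i j
      ext p q
      rw [← tmat_apply, hC, tmat_mul_apply]
    constructor
    · ext ⟨p, i⟩ ⟨q, j⟩
      rw [tmat_mul_apply, tmat_apply]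
      simp only [tubeSMul_apply, thMat_tubeCMul hM, hC', Finset.mul_sum]
      refine congrFun (congrFun ?_ p) q
      apply Finset.sum_congr rfl
      intro l _
      rw [← Matrix.mul_assoc, ← Matrix.mul_assoc, thMat_comm hM a]
    · ext ⟨p, i⟩ ⟨q, j⟩
      rw [tmat_mul_apply, tmat_apply]
      simp only [tubeSMul_apply, thMat_tubeCMul hM, hC', Finset.mul_sum, Matrix.mul_assoc]
  · have hz : ∀ {r s : ℕ} (X : Fin n3 → Matrix (Fin r) (Fin s) ℝ), tmat (tubeSMul a X) = 0 := by
      intro r s X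
      have : tubeSMul a X = 0 := by
        ext k
        simp [tubeSMul, Matrix.nonsing_inv_apply_not_isUnit _ hM]
      rw [this]
      ext ⟨p, i⟩ ⟨q, j⟩
      simp only [tmat, hankelPart, Matrix.of_apply]
      split_ifs <;> simp
    simp [hz]


end
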